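/- For every n ∈ ℕ, the transformation T_n together with the maps T_n(f) and the supports supp^{T_n} is a normal PO-dilator, and likewise T_{n+1}^- together with the maps T_{n+1}^-(f) and the supports supp^{T_{n+1}^-} is a normal PO-dilator. -/

import Mathlib

universe u

/-- Terms for labelled trees: leaves carry labels from `X`, inner nodes carry
natural number labels and a (multi)set of immediate subtrees, represented as a list. -/
inductive TTerm (X : Type u) : Type u
  | leaf : X → TTerm X
  | node : ℕ → List (TTerm X) → TTerm X

namespace TTerm

/-- All node labels are `< n`. -/
inductive Bdd (n : ℕ) {X : Type u} : TTerm X → Prop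
  | leaf (x : X) : Bdd n (leaf x)
  | node {i : ℕ} {l : List (TTerm X)} : i < n → (∀ t ∈ l, Bdd n t) → Bdd n (node i l)

/-- The term is a leaf or has root label `0`. -/
def IsMinus {X : Type u} : TTerm X → Prop
  | leaf _ => True
  | node i _ => i = 0

/-- The recursively defined gap order `≤_{T_n(X)}`, relative to a relation `r`
on the leaf labels.  Lists of subtrees are compared as multisets: via an
injection that relates corresponding entries. -/
inductive TLE {X : Type u} (r : X → X → Prop) : TTerm X → TTerm X → Prop
  | leaf {x y : X} : r x y → TLE r (leaf x) (leaf y)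
  | leaf_sub {x : X} {j : ℕ} {l : List (TTerm X)} {t : TTerm X} :
      t ∈ l → TLE r (leaf x) t → TLE r (leaf x) (node j l)
  | node {i : ℕ} {l l' : List (TTerm X)} (g : Fin l.length → Fin l'.length) :
      Function.Injective g → (∀ k, TLE r (l.get k) (l'.get (g k))) →
      TLE r (node i l) (node i l')
  | node_sub {i j : ℕ} {σ : List (TTerm X)} {l : List (TTerm X)} {t : TTerm X} :
      i ≤ j → t ∈ l → TLE r (node i σ) t → TLE r (node i σ) (node j l)

/-- Equality of terms as labelled trees with multisets of subtrees, relative to a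
relation `e` identifying leaf labels. -/
inductive TEquiv {X : Type u} (e : X → X → Prop) : TTerm X → TTerm X → Prop
  | leaf {x y : X} : e x y → TEquiv e (leaf x) (leaf y)
  | node {i : ℕ} {l l' : List (TTerm X)} (g : Fin l.length → Fin l'.length) :
      Function.Bijective g → (∀ k, TEquiv e (l.get k) (l'.get (g k))) →
      TEquiv e (node i l) (node i l')

/-- The height of a term. -/
def height {X : Type u} : TTerm X → ℕ
  | leaf _ => 0
  | node _ l => (l.attach.map (fun t => height t.1)).foldr (fun a b => max (a + 1) b) 0
decreasing_by
  have := List.sizeOf_lt_of_mem t.2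
  simp only [TTerm.node.sizeOf_spec]
  omega

/-- The support of a term: the set of its leaf labels. -/
def suppT {X : Type u} : TTerm X → Set X
  | leaf x => {x}
  | node _ l => (l.attach.map (fun t => suppT t.1)).foldr (· ∪ ·) ∅
decreasing_by
  have := List.sizeOf_lt_of_mem t.2
  simp only [TTerm.node.sizeOf_spec]
  omega

/-- The action of `T_n` on maps. -/
def tmap {X Y : Type u} (f : X → Y) : TTerm X → TTerm Y
  | leaf x => leaf (f x)
  | node i l => node i (l.attach.map (fun t => tmap f t.1))
decreasing_by
  have := List.sizeOf_lt_of_mem t.2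
  simp only [TTerm.node.sizeOf_spec]
  omega

end TTerm

open TTerm

/-- A quasi embedding of partial orders. -/
def QuasiEmb {X Y : Type*} [PartialOrder X] [PartialOrder Y] (f : X → Y) : Prop :=
  ∀ x y : X, f x ≤ f y → x ≤ y

/-- An embedding of partial orders. -/
def IsEmb {X Y : Type*} [PartialOrder X] [PartialOrder Y] (f : X → Y) : Prop :=
  ∀ x y : X, x ≤ y ↔ f x ≤ f y

/-- The relation `a ≤ᶠⁱⁿ b` on subsets of a partial order. -/
def LeFin {X : Type*} [PartialOrder X] (a b : Set X) : Prop :=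
  ∀ x ∈ a, ∃ y ∈ b, x ≤ y

/-- `T_n(X)`: tree terms with labels bounded by `n`. -/
def Tn (n : ℕ) (X : Type u) : Type u := {t : TTerm X // TTerm.Bdd n t}

/-- `T_n(X)` with terms representing the same labelled tree identified. -/
def TnQ (n : ℕ) (X : Type u) : Type u :=
  Quot (fun a b : Tn n X => TEquiv Eq a.1 b.1)

/-- The gap order on `T_n(X)`. -/
def TnQLE (n : ℕ) (X : Type u) [PartialOrder X] : TnQ n X → TnQ n X → Prop :=
  fun a b => ∃ s t : Tn n X, a = Quot.mk _ s ∧ b = Quot.mk _ t ∧ TLE (· ≤ ·) s.1 t.1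

/-- `T_n^-(X)`: bounded tree terms that are leaves or have root label `0`. -/
def TnM (n : ℕ) (X : Type u) : Type u :=
  {t : TTerm X // TTerm.Bdd n t ∧ TTerm.IsMinus t}

/-- `T_n^-(X)` with terms representing the same labelled tree identified. -/
def TnMQ (n : ℕ) (X : Type u) : Type u :=
  Quot (fun a b : TnM n X => TEquiv Eq a.1 b.1)

/-- The gap order on `T_n^-(X)`. -/
def TnMQLE (n : ℕ) (X : Type u) [PartialOrder X] : TnMQ n X → TnMQ n X → Prop :=
  fun a b => ∃ s t : TnM n X, a = Quot.mk _ s ∧ b = Quot.mk _ t ∧ TLE (· ≤ ·) s.1 t.1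

theorem tind {X : Type u} {P : TTerm X → Prop} (hl : ∀ x, P (TTerm.leaf x))
    (hn : ∀ i l, (∀ t ∈ l, P t) → P (TTerm.node i l)) : ∀ t, P t
  | TTerm.leaf x => hl x
  | TTerm.node i l => hn i l (fun t ht => tind hl hn t)
decreasing_by
  have := List.sizeOf_lt_of_mem ht
  simp only [TTerm.node.sizeOf_spec]
  omega

theorem tmap_leaf' {X Y : Type u} (f : X → Y) (x : X) :
    tmap f (TTerm.leaf x) = TTerm.leaf (f x) := by
  rw [tmap]

theorem tmap_node' {X Y : Type u} (f : X → Y) (i : ℕ) (l : List (TTerm X)) :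
    tmap f (TTerm.node i l) = TTerm.node i (l.map (tmap f)) := by
  rw [tmap]
  congr 1
  simp

theorem suppT_leaf' {X : Type u} (x : X) : suppT (TTerm.leaf x) = {x} := by
  rw [suppT]

theorem mem_suppT_node {X : Type u} (i : ℕ) (l : List (TTerm X)) (x : X) :
    x ∈ suppT (TTerm.node i l) ↔ ∃ t ∈ l, x ∈ suppT t := by
  rw [suppT]
  have h : l.attach.map (fun t => suppT t.1) = l.map suppT := by simp
  rw [h]
  induction l with
  | nil => simp
  | cons a l ih => simp_all

theorem height_node_le {X : Type u} (i : ℕ) (l : List (TTerm X)) (m : ℕ) :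
    height (TTerm.node i l) ≤ m ↔ ∀ t ∈ l, height t + 1 ≤ m := by
  rw [height]
  have h : l.attach.map (fun t => height t.1) = l.map height := by simp
  rw [h]
  clear h
  induction l with
  | nil => simp
  | cons a l ih => simp only [List.map_cons, List.foldr_cons, max_le_iff, ih, List.forall_mem_cons]

theorem height_lt_node {X : Type u} (i : ℕ) (l : List (TTerm X)) {t : TTerm X} (h : t ∈ l) :
    height t < height (TTerm.node i l) :=
  (height_node_le i l _).1 le_rfl t h

theorem TLE_height {X : Type u} {r : X → X → Prop} {s t : TTerm X} (h : TLE r s t) :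
    height s ≤ height t := by
  induction h with
  | leaf h => simp [height]
  | leaf_sub _ _ _ => simp [height]
  | node g hg h ih =>
    rw [height_node_le]
    intro t ht
    obtain ⟨k, rfl⟩ := List.get_of_mem ht
    exact lt_of_le_of_lt (ih k) (height_lt_node _ _ (List.get_mem _ _))
  | node_sub hij ht h ih => exact ih.trans (height_lt_node _ _ ht).le

theorem TLE_refl {X : Type u} [PartialOrder X] (t : TTerm X) : TLE (· ≤ ·) t t := by
  induction t using tind with
  | hl x => exact TLE.leaf le_rfl
  | hn i l ih => exact TLE.node id Function.injective_id (fun k => ih _ (List.get_mem _ _))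

theorem TLE_label {X : Type u} {r : X → X → Prop} {i j : ℕ} {l l' : List (TTerm X)}
    (h : TLE r (TTerm.node i l) (TTerm.node j l')) : i ≤ j := by
  cases h with
  | node => exact le_rfl
  | node_sub h => exact h

theorem TLE_trans {X : Type u} [PartialOrder X] {s t w : TTerm X}
    (h1 : TLE (· ≤ ·) s t) (h2 : TLE (· ≤ ·) t w) : TLE (· ≤ ·) s w := by
  induction h2 generalizing s with
  | leaf h =>
    cases h1 with
    | leaf h' => exact TLE.leaf (le_trans h' h)
  | leaf_sub ht h ih =>
    have := ih h1
    cases h1 with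
    | leaf h' => exact TLE.leaf_sub ht this
  | node g hg h ih =>
    cases h1 with
    | leaf_sub hm h' =>
      obtain ⟨k, rfl⟩ := List.get_of_mem hm
      exact TLE.leaf_sub (List.get_mem _ _) (ih k h')
    | node g' hg' h' =>
      exact TLE.node (g ∘ g') (hg.comp hg') (fun k => ih _ (h' k))
    | node_sub hij hm h' =>
      obtain ⟨k, rfl⟩ := List.get_of_mem hm
      exact TLE.node_sub hij (List.get_mem _ _) (ih k h')
  | node_sub hij ht h ih =>
    have := ih h1
    cases s with
    | leaf x => exact TLE.leaf_sub ht this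
    | node i l => exact TLE.node_sub ((TLE_label h1).trans hij) ht this

theorem TEquiv_TLE {X : Type u} [PartialOrder X] {s t : TTerm X} (h : TEquiv Eq s t) :
    TLE (· ≤ ·) s t ∧ TLE (· ≤ ·) t s := by
  induction h with
  | leaf h => subst h; exact ⟨TLE_refl _, TLE_refl _⟩
  | node g hg h ih =>
    refine ⟨TLE.node g hg.1 (fun k => (ih k).1), ?_⟩
    let e := Equiv.ofBijective g hg
    refine TLE.node e.symm e.symm.injective (fun k => ?_)
    have := (ih (e.symm k)).2
    have hk : g (e.symm k) = k := e.apply_symm_apply k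
    rwa [hk] at this

theorem TLE_antisymm {X : Type u} [PartialOrder X] (s : TTerm X) : ∀ {t : TTerm X},
    TLE (· ≤ ·) s t → TLE (· ≤ ·) t s → TEquiv Eq s t := by
  induction s using tind with
  | hl x =>
    intro t h1 h2
    cases h2 with
    | leaf h =>
      cases h1 with
      | leaf h' => exact TEquiv.leaf (le_antisymm h' h)
  | hn i l ih =>
    intro t h1 h2
    have H1 := TLE_height h1
    have H2 := TLE_height h2
    cases h1 with
    | node_sub hij ht h =>
      rename_i j _ _
      have a := TLE_height h
      have b := height_lt_node j _ ht
      exact absurd (lt_of_le_of_lt a b) (not_lt.2 H2)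
    | node g hg h =>
      rename_i l'
      cases h2 with
      | node_sub hij ht h =>
        have a := TLE_height h
        have b := height_lt_node i _ ht
        exact absurd (lt_of_le_of_lt a b) (not_lt.2 H1)
      | node g' hg' h' =>
        have hlen : l.length = l'.length := le_antisymm
          (by simpa using Fintype.card_le_of_injective g hg)
          (by simpa using Fintype.card_le_of_injective g' hg')
        have hb : Function.Bijective g :=
          (Fintype.bijective_iff_injective_and_card g).2 ⟨hg, by simpa using hlen⟩
        refine TEquiv.node g hb (fun k => ih _ (List.get_mem _ _) (h k) ?_)
        have step : ∀ k, TLE (· ≤ ·) (l.get k) (l.get (g' (g k))) :=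
          fun k => TLE_trans (h k) (h' _)
        have iter : ∀ (m : ℕ) k, TLE (· ≤ ·) (l.get k) (l.get ((g' ∘ g)^[m] k)) := by
          intro m
          induction m with
          | zero => intro k; exact TLE_refl _
          | succ m ihm => intro k; exact TLE_trans (step k) (ihm _)
        have hper : k ∈ Function.periodicPts (g' ∘ g) :=
          (hg'.comp hg).mem_periodicPts k
        obtain ⟨m, hm, hp⟩ := hper
        obtain ⟨m, rfl⟩ := Nat.exists_eq_succ_of_ne_zero hm.ne'
        have := iter m (g' (g k))
        have e : (g' ∘ g)^[m] (g' (g k)) = k := hp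
        rw [e] at this
        exact TLE_trans (h' _) this

theorem quot_eq_TLE {X : Type u} [PartialOrder X] {P : TTerm X → Prop}
    {a b : {t : TTerm X // P t}}
    (h : Quot.mk (fun a b : {t : TTerm X // P t} => TEquiv Eq a.1 b.1) a = Quot.mk _ b) :
    TLE (· ≤ ·) a.1 b.1 ∧ TLE (· ≤ ·) b.1 a.1 := by
  replace h := Quot.eqvGen_exact h
  induction h with
  | rel _ _ h => exact TEquiv_TLE h
  | refl _ => exact ⟨TLE_refl _, TLE_refl _⟩
  | symm _ _ _ ih => exact ih.symm
  | trans _ _ _ _ _ ih1 ih2 => exact ⟨TLE_trans ih1.1 ih2.1, TLE_trans ih2.2 ih1.2⟩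

theorem quot_po {X : Type u} [PartialOrder X] (P : TTerm X → Prop) :
    IsPartialOrder (Quot (fun a b : {t : TTerm X // P t} => TEquiv Eq a.1 b.1))
      (fun a b => ∃ s t : {t : TTerm X // P t}, a = Quot.mk _ s ∧ b = Quot.mk _ t ∧
        TLE (· ≤ ·) s.1 t.1) where
  refl a := by
    induction a using Quot.ind with
    | mk a => exact ⟨a, a, rfl, rfl, TLE_refl _⟩
  trans := by
    rintro _ _ _ ⟨s, t, rfl, rfl, h⟩ ⟨s', t', h', rfl, h''⟩
    exact ⟨s, t', rfl, rfl, TLE_trans (TLE_trans h (quot_eq_TLE h').1) h''⟩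
  antisymm := by
    rintro _ _ ⟨s, t, rfl, rfl, h⟩ ⟨s', t', h1, h2, h''⟩
    exact Quot.sound (TLE_antisymm _ h
      (TLE_trans (TLE_trans (quot_eq_TLE h1).1 h'') (quot_eq_TLE h2).2))

theorem tmap_TLE {X Y : Type u} [PartialOrder X] [PartialOrder Y] {f : X → Y}
    (hf : ∀ x y, x ≤ y → f x ≤ f y) {s t : TTerm X} (h : TLE (· ≤ ·) s t) :
    TLE (· ≤ ·) (tmap f s) (tmap f t) := by
  induction h with
  | leaf h => simp only [tmap_leaf']; exact TLE.leaf (hf _ _ h)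
  | leaf_sub ht h ih =>
    simp only [tmap_leaf', tmap_node'] at ih ⊢
    exact TLE.leaf_sub (List.mem_map_of_mem ht) ih
  | node g hg h ih =>
    simp only [tmap_node']
    refine TLE.node (fun k => Fin.cast (by simp) (g (Fin.cast (by simp) k))) ?_ ?_
    · intro a b hab
      simpa [Fin.ext_iff] using hg (Fin.cast_injective _ hab)
    · intro k
      simpa using ih (Fin.cast (by simp) k)
  | node_sub hij ht h ih =>
    simp only [tmap_node'] at ih ⊢
    exact TLE.node_sub hij (List.mem_map_of_mem ht) ih

theorem tmap_TLE_inv {X Y : Type u} [PartialOrder X] [PartialOrder Y] {f : X → Y}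
    (hf : QuasiEmb f) {s t : TTerm X} (h : TLE (· ≤ ·) (tmap f s) (tmap f t)) :
    TLE (· ≤ ·) s t := by
  generalize hS : tmap f s = S at h
  generalize hT : tmap f t = T at h
  induction h generalizing s t with
  | leaf h =>
    cases s <;> cases t <;> simp only [tmap_leaf', tmap_node', TTerm.leaf.injEq, reduceCtorEq] at hS hT
    subst hS hT
    exact TLE.leaf (hf _ _ h)
  | leaf_sub ht h ih =>
    cases s <;> cases t <;> simp only [tmap_leaf', tmap_node', TTerm.leaf.injEq, TTerm.node.injEq, reduceCtorEq] at hS hT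
    obtain ⟨rfl, rfl⟩ := hT
    subst hS
    obtain ⟨t', ht', rfl⟩ := List.mem_map.1 ht
    exact TLE.leaf_sub ht' (ih (tmap_leaf' _ _) rfl)
  | node g hg h ih =>
    cases s <;> cases t <;> simp only [tmap_leaf', tmap_node', TTerm.leaf.injEq, TTerm.node.injEq, reduceCtorEq] at hS hT
    obtain ⟨rfl, rfl⟩ := hT
    obtain ⟨rfl, rfl⟩ := hS
    refine TLE.node (fun k => Fin.cast (by simp) (g (Fin.cast (by simp) k))) ?_ ?_
    · intro a b hab
      simpa [Fin.ext_iff] using hg (Fin.cast_injective _ hab)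
    · intro k
      refine ih (Fin.cast (by simp) k) ?_ ?_ <;> simp
  | node_sub hij ht h ih =>
    cases s <;> cases t <;> simp only [tmap_leaf', tmap_node', TTerm.leaf.injEq, TTerm.node.injEq, reduceCtorEq] at hS hT
    obtain ⟨rfl, rfl⟩ := hT
    obtain ⟨rfl, rfl⟩ := hS
    obtain ⟨t', ht', rfl⟩ := List.mem_map.1 ht
    exact TLE.node_sub hij ht' (ih (tmap_node' _ _ _) rfl)

theorem Bdd_tmap {X Y : Type u} (n : ℕ) (f : X → Y) {t : TTerm X} (h : TTerm.Bdd n t) :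
    TTerm.Bdd n (tmap f t) := by
  induction h with
  | leaf x => rw [tmap_leaf']; exact Bdd.leaf _
  | node hi _ ih =>
    rw [tmap_node']
    refine Bdd.node hi ?_
    intro t ht
    obtain ⟨s, hs, rfl⟩ := List.mem_map.1 ht
    exact ih s hs

theorem IsMinus_tmap {X Y : Type u} (f : X → Y) (t : TTerm X) :
    TTerm.IsMinus (tmap f t) ↔ TTerm.IsMinus t := by
  cases t with
  | leaf x => rw [tmap_leaf']; rfl
  | node i l => rw [tmap_node']; rfl

theorem suppT_finite {X : Type u} (t : TTerm X) : (suppT t).Finite := by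
  induction t using tind with
  | hl x => rw [suppT_leaf']; exact Set.finite_singleton x
  | hn i l ih =>
    have : suppT (TTerm.node i l) = ⋃ t ∈ {t | t ∈ l}, suppT t := by
      ext x
      simp [mem_suppT_node]
    rw [this]
    exact Set.Finite.biUnion l.finite_toSet ih

theorem suppT_tmap {X Y : Type u} (f : X → Y) (t : TTerm X) :
    suppT (tmap f t) = f '' suppT t := by
  induction t using tind with
  | hl x => rw [tmap_leaf', suppT_leaf', suppT_leaf', Set.image_singleton]
  | hn i l ih =>
    ext y
    rw [tmap_node', mem_suppT_node]
    constructor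
    · rintro ⟨t, ht, hy⟩
      obtain ⟨s, hs, rfl⟩ := List.mem_map.1 ht
      rw [ih s hs] at hy
      obtain ⟨x, hx, rfl⟩ := hy
      exact ⟨x, (mem_suppT_node _ _ _).2 ⟨s, hs, hx⟩, rfl⟩
    · rintro ⟨x, hx, rfl⟩
      obtain ⟨s, hs, hx⟩ := (mem_suppT_node _ _ _).1 hx
      exact ⟨_, List.mem_map_of_mem hs, by rw [ih s hs]; exact ⟨x, hx, rfl⟩⟩

theorem supp_cond {X Y : Type u} (n : ℕ) (f : X → Y) {t : TTerm Y} (h : TTerm.Bdd n t) :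
    suppT t ⊆ Set.range f → ∃ s : TTerm X, TTerm.Bdd n s ∧ tmap f s = t := by
  induction h with
  | leaf y =>
    intro hs
    rw [suppT_leaf', Set.singleton_subset_iff] at hs
    obtain ⟨x, rfl⟩ := hs
    exact ⟨_, Bdd.leaf x, tmap_leaf' _ _⟩
  | @node i l hi _ ih =>
    intro hs
    have h1 : ∀ t ∈ l, ∃ s : TTerm X, TTerm.Bdd n s ∧ tmap f s = t :=
      fun t ht => ih t ht (fun y hy => hs ((mem_suppT_node _ _ _).2 ⟨t, ht, hy⟩))
    have h2 : ∃ l' : List (TTerm X), (∀ s ∈ l', TTerm.Bdd n s) ∧ l'.map (tmap f) = l := by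
      clear ih hs
      induction l with
      | nil => exact ⟨[], by simp, rfl⟩
      | cons a l ihl =>
        obtain ⟨s, hs, rfl⟩ := h1 a (by simp)
        obtain ⟨l', hl', rfl⟩ := ihl (by simp_all) (fun t ht => h1 t (by simp [ht]))
        exact ⟨s :: l', by simpa using ⟨hs, hl'⟩, rfl⟩
    obtain ⟨l', hl', rfl⟩ := h2
    exact ⟨TTerm.node i l', Bdd.node hi hl', tmap_node' _ _ _⟩

theorem TLE_supp {X : Type u} [PartialOrder X] {s t : TTerm X} (h : TLE (· ≤ ·) s t) :
    LeFin (suppT s) (suppT t) := by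
  induction h with
  | leaf h =>
    intro x hx
    rw [suppT_leaf'] at hx
    obtain rfl := hx
    exact ⟨_, by rw [suppT_leaf']; rfl, h⟩
  | leaf_sub ht h ih =>
    intro x hx
    obtain ⟨y, hy, hxy⟩ := ih x hx
    exact ⟨y, (mem_suppT_node _ _ _).2 ⟨_, ht, hy⟩, hxy⟩
  | node g hg h ih =>
    intro x hx
    obtain ⟨t, ht, hx⟩ := (mem_suppT_node _ _ _).1 hx
    obtain ⟨k, rfl⟩ := List.get_of_mem ht
    obtain ⟨y, hy, hxy⟩ := ih k x hx
    exact ⟨y, (mem_suppT_node _ _ _).2 ⟨_, List.get_mem _ _, hy⟩, hxy⟩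
  | node_sub hij ht h ih =>
    intro x hx
    obtain ⟨y, hy, hxy⟩ := ih x hx
    exact ⟨y, (mem_suppT_node _ _ _).2 ⟨_, ht, hy⟩, hxy⟩

theorem tmap_id' {X : Type u} (t : TTerm X) : tmap (id : X → X) t = t := by
  induction t using tind with
  | hl x => rw [tmap_leaf']; rfl
  | hn i l ih =>
    rw [tmap_node', List.map_congr_left (g := id) (fun t ht => ih t ht), List.map_id]

theorem tmap_comp' {X Y Z : Type u} (f : X → Y) (g : Y → Z) (t : TTerm X) :
    tmap (g ∘ f) t = tmap g (tmap f t) := by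
  induction t using tind with
  | hl x => simp only [tmap_leaf']; rfl
  | hn i l ih =>
    rw [tmap_node', tmap_node', tmap_node', List.map_map]
    exact congrArg _ (List.map_congr_left (fun t ht => ih t ht))

/-- `T_n` and `T_{n+1}^-`, with the maps `tmap` and the supports `suppT`, are
normal PO-dilators. -/
theorem tn_tnMinus_normal_PO_dilator (n : ℕ) :
    -- `T_n(X)` and `T_{n+1}^-(X)` are partial orders
    (∀ (X : Type u) [PartialOrder X], IsPartialOrder (TnQ n X) (TnQLE n X)) ∧
    (∀ (X : Type u) [PartialOrder X], IsPartialOrder (TnMQ (n + 1) X) (TnMQLE (n + 1) X)) ∧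
    -- functoriality of `tmap`
    (∀ (X : Type u) (t : TTerm X), tmap (id : X → X) t = t) ∧
    (∀ (X Y Z : Type u) (f : X → Y) (g : Y → Z) (t : TTerm X),
        tmap (g ∘ f) t = tmap g (tmap f t)) ∧
    -- `tmap f` restricts to `T_n(X) → T_n(Y)` and to `T_{n+1}^-(X) → T_{n+1}^-(Y)`
    (∀ (X Y : Type u) (f : X → Y) (t : TTerm X), TTerm.Bdd n t → TTerm.Bdd n (tmap f t)) ∧
    (∀ (X Y : Type u) (f : X → Y) (t : TTerm X), TTerm.IsMinus t → TTerm.IsMinus (tmap f t)) ∧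
    -- `T_n` sends quasi embeddings to quasi embeddings
    (∀ (X Y : Type u) [PartialOrder X] [PartialOrder Y] (f : X → Y), QuasiEmb f →
        ∀ s t : TTerm X, TTerm.Bdd n s → TTerm.Bdd n t →
          TLE (· ≤ ·) (tmap f s) (tmap f t) → TLE (· ≤ ·) s t) ∧
    -- `T_n` sends embeddings to embeddings
    (∀ (X Y : Type u) [PartialOrder X] [PartialOrder Y] (f : X → Y), IsEmb f →
        ∀ s t : TTerm X, TTerm.Bdd n s → TTerm.Bdd n t →
          (TLE (· ≤ ·) s t ↔ TLE (· ≤ ·) (tmap f s) (tmap f t))) ∧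
    -- supports are finite
    (∀ (X : Type u) (t : TTerm X), (suppT t).Finite) ∧
    -- naturality of supports
    (∀ (X Y : Type u) (f : X → Y) (t : TTerm X), suppT (tmap f t) = f '' suppT t) ∧
    -- the support condition for `T_n`
    (∀ (X Y : Type u) [PartialOrder X] [PartialOrder Y] (f : X → Y), IsEmb f →
        ∀ t : TTerm Y, TTerm.Bdd n t → suppT t ⊆ Set.range f →
          ∃ s : TTerm X, TTerm.Bdd n s ∧ tmap f s = t) ∧
    -- the support condition for `T_{n+1}^-`
    (∀ (X Y : Type u) [PartialOrder X] [PartialOrder Y] (f : X → Y), IsEmb f →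
        ∀ t : TTerm Y, TTerm.Bdd (n + 1) t → TTerm.IsMinus t → suppT t ⊆ Set.range f →
          ∃ s : TTerm X, (TTerm.Bdd (n + 1) s ∧ TTerm.IsMinus s) ∧ tmap f s = t) ∧
    -- normality
    (∀ (X : Type u) [PartialOrder X] (s t : TTerm X), TTerm.Bdd n s → TTerm.Bdd n t →
        TLE (· ≤ ·) s t → LeFin (suppT s) (suppT t)) := by
  refine ⟨fun X _ => quot_po _, fun X _ => quot_po _, fun X t => tmap_id' t,
    fun X Y Z f g t => tmap_comp' f g t, fun X Y f t h => Bdd_tmap n f h,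
    fun X Y f t h => (IsMinus_tmap f t).2 h, fun X Y _ _ f hf s t _ _ h => tmap_TLE_inv hf h,
    fun X Y _ _ f hf s t _ _ => ⟨tmap_TLE (fun x y => (hf x y).1),
      tmap_TLE_inv (fun x y => (hf x y).2)⟩,
    fun X t => suppT_finite t, fun X Y f t => suppT_tmap f t,
    fun X Y _ _ f _ t ht hs => supp_cond n f ht hs, ?_,
    fun X _ s t _ _ h => TLE_supp h⟩
  intro X Y _ _ f _ t ht hm hs
  obtain ⟨s, hb, rfl⟩ := supp_cond (n + 1) f ht hs
  exact ⟨s, ⟨hb, (IsMinus_tmap f s).1 hm⟩, rfl⟩
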